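/- arXiv:2002.09363 — 2 statements merged into one kernel-verified Lean document; each statement's English description precedes it below -/
import Mathlib

section
/- Invariance of the ε-ball under T (Proposition 2.8, part 1): Set γ := ‖Q‖_{(d+1)/2,ℤ^k} and δ := ‖Q‖_{d+1,ℤ^k∖{0}}, assumed finite. If ε > 0 satisfies δ + γ ε^d ≤ ε, then T maps B_ε(0) ∩ D into itself, where B_ε(0) is the closed ball of radius ε around 0 in ℓ^{d+1}(ℤ^k∖{0}); that is, for every x ∈ D with ‖x‖_{d+1,ℤ^k∖{0}} ≤ ε one has T(x) ∈ D and ‖T(x)‖_{d+1,ℤ^k∖{0}} ≤ ε. -/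
/-!
The denominator of `T` is at least `1`, so `0 ≤ T(x) ≤ Q + Q * x^d` pointwise, with `*` the
convolution. By Minkowski's inequality `‖T(x)‖_{d+1}` is at most `δ + ‖Q * x^d‖_{d+1}`, and Young's
convolution inequality with exponents `(d+1)/2` for `Q` and `(d+1)/d` for `x^d` bounds the second
term by `γ ‖x‖_{d+1}^d ≤ γ ε^d`. The estimates hold for `ℝ≥0∞`-valued families without any
summability condition, and the finiteness of the resulting bound yields `T(x) ∈ ℓ^{d+1}`.
-/

open scoped BigOperators
open Filter Topology

noncomputable section

/-- The integer lattice `ℤ^k`. -/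
abbrev ZkL (k : ℕ) := Fin k → ℤ

/-- The punctured integer lattice `ℤ^k ∖ {0}`, as a subtype. -/
abbrev ZkP (k : ℕ) := {j : ZkL k // j ≠ 0}

/-- The `p`-norm `‖x‖_{p, ℤ^k}` of a function on all of `ℤ^k`. -/
noncomputable def normFull (k : ℕ) (p : ℝ) (x : ZkL k → ℝ) : ℝ :=
  (∑' j : ZkL k, |x j| ^ p) ^ (1 / p)

/-- The `p`-norm `‖x‖_{p, ℤ^k ∖ {0}}` of a function on `ℤ^k`, restricted to nonzero sites. -/
noncomputable def normPunct (k : ℕ) (p : ℝ) (x : ZkL k → ℝ) : ℝ :=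
  (∑' j : ZkP k, |x j.1| ^ p) ^ (1 / p)

/-- The `p`-norm of a function defined on `ℤ^k ∖ {0}`. -/
noncomputable def norm0 (k : ℕ) (p : ℝ) (x : ZkP k → ℝ) : ℝ :=
  (∑' j : ZkP k, |x j| ^ p) ^ (1 / p)

/-- `γ := ‖Q‖_{(d+1)/2, ℤ^k}`. -/
noncomputable def gam (k d : ℕ) (Q : ZkL k → ℝ) : ℝ := normFull k (((d : ℝ) + 1) / 2) Q

/-- `δ := ‖Q‖_{d+1, ℤ^k ∖ {0}}`. -/
noncomputable def del (k d : ℕ) (Q : ZkL k → ℝ) : ℝ := normPunct k ((d : ℝ) + 1) Q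

/-- Membership in `D`: an element of `ℓ^{d+1}(ℤ^k ∖ {0})` with nonnegative entries. -/
def memD (k d : ℕ) (x : ZkP k → ℝ) : Prop :=
  Summable (fun j : ZkP k => |x j| ^ ((d : ℝ) + 1)) ∧ ∀ j : ZkP k, 0 ≤ x j

/-- The operator `T`:
`T(x)(i) = (Q(i) + Σ_{j≠0} Q(i−j) x(j)^d) / (1 + Σ_{j≠0} Q(j) x(j)^d)`. -/
noncomputable def opT (k d : ℕ) (Q : ZkL k → ℝ) (x : ZkP k → ℝ) (i : ZkL k) : ℝ :=
  (Q i + ∑' j : ZkP k, Q (i - j.1) * x j ^ d) /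
  (1 + ∑' j : ZkP k, Q j.1 * x j ^ d)

/-- The good set `G_d`. -/
def goodSet (d : ℕ) : Set (ℝ × ℝ) :=
  {gd | 1 < gd.1 ∧ 0 < gd.2 ∧ ∃ ε > 0,
    gd.2 + gd.1 * ε ^ d ≤ ε ∧
    2 * d * gd.1 * ε ^ (d - 1) + 2 * d * gd.2 * ε ^ d < 1}

open scoped ENNReal

section ExtendedNorm

variable {ι κ : Type*}

/-- The `ℓ^p` norm of an `ℝ≥0∞`-valued family, infinite where the sum of the `p`-th powers
diverges. -/
def eellNorm (p : ℝ) (f : ι → ℝ≥0∞) : ℝ≥0∞ :=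
  (∑' i, f i ^ p) ^ (1 / p)

lemma eellNorm_rpow_self {p : ℝ} (hp : p ≠ 0) (f : ι → ℝ≥0∞) :
    eellNorm p f ^ p = ∑' i, f i ^ p := by
  rw [eellNorm, ← ENNReal.rpow_mul, one_div_mul_cancel hp, ENNReal.rpow_one]

lemma eellNorm_le_iff {p : ℝ} (hp : 0 < p) {f : ι → ℝ≥0∞} {C : ℝ≥0∞} :
    eellNorm p f ≤ C ↔ ∑' i, f i ^ p ≤ C ^ p := by
  rw [← eellNorm_rpow_self hp.ne', ENNReal.rpow_le_rpow_iff hp]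

lemma eellNorm_mono {p : ℝ} (hp : 0 ≤ p) {f g : ι → ℝ≥0∞} (hfg : ∀ i, f i ≤ g i) :
    eellNorm p f ≤ eellNorm p g := by
  unfold eellNorm
  gcongr with i
  exact hfg i

lemma eellNorm_comp_le {p : ℝ} (hp : 0 ≤ p) {φ : ι → κ} (hφ : φ.Injective) (f : κ → ℝ≥0∞) :
    eellNorm p (fun i ↦ f (φ i)) ≤ eellNorm p f :=
  ENNReal.rpow_le_rpow (ENNReal.tsum_comp_le_tsum_of_injective hφ fun k ↦ f k ^ p) (by positivity)

lemma eellNorm_rpow {s : ℝ} (hs : s ≠ 0) (p : ℝ) (f : ι → ℝ≥0∞) :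
    eellNorm p (fun i ↦ f i ^ s) = eellNorm (s * p) f ^ s := by
  simp only [eellNorm, ← ENNReal.rpow_mul]
  congr 1
  field_simp

lemma eellNorm_add_le {p : ℝ} (hp : 1 ≤ p) (f g : ι → ℝ≥0∞) :
    eellNorm p (fun i ↦ f i + g i) ≤ eellNorm p f + eellNorm p g := by
  let _ : MeasurableSpace ι := ⊤
  have h := ENNReal.lintegral_Lp_add_le (μ := MeasureTheory.Measure.count) (f := f) (g := g)
    measurable_from_top.aemeasurable measurable_from_top.aemeasurable hp
  simpa only [eellNorm, MeasureTheory.lintegral_count, Pi.add_apply] using h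

lemma tsum_prod_rpow_le (s : Finset κ) (f : κ → ι → ℝ≥0∞) {w : κ → ℝ}
    (hw : ∀ k ∈ s, 0 ≤ w k) (hw_sum : ∑ k ∈ s, w k = 1) :
    ∑' i, ∏ k ∈ s, f k i ^ w k ≤ ∏ k ∈ s, (∑' i, f k i) ^ w k := by
  let _ : MeasurableSpace ι := ⊤
  simpa only [MeasureTheory.lintegral_count] using
    ENNReal.lintegral_prod_norm_pow_le (μ := MeasureTheory.Measure.count) s
      (fun k _ ↦ (measurable_from_top (f := f k)).aemeasurable) hw_sum hw

end ExtendedNorm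

section Young

variable {ι κ : Type*} {p q r : ℝ}

lemma tsum_mul_rpow_le (hp : 1 ≤ p) (hq : 1 ≤ q) (hr : 0 < r) (hpqr : p⁻¹ + q⁻¹ = 1 + r⁻¹)
    (u v : ι → ℝ≥0∞) :
    (∑' i, u i * v i) ^ r ≤
      (∑' i, u i ^ p * v i ^ q) * (eellNorm p u ^ (r - p) * eellNorm q v ^ (r - q)) := by
  have hp0 : 0 < p := by linarith
  have hq0 : 0 < q := by linarith
  have hpr : 0 ≤ p⁻¹ - r⁻¹ := by linarith [inv_le_one_of_one_le₀ hq]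
  have hqr : 0 ≤ q⁻¹ - r⁻¹ := by linarith [inv_le_one_of_one_le₀ hp]
  -- The mixed factor gets the Hölder weight `1/r`, so the `r`-th power of the sum is linear in it.
  have factorization (a b : ℝ≥0∞) :
      a * b = (a ^ p * b ^ q) ^ r⁻¹ * (a ^ p) ^ (p⁻¹ - r⁻¹) * (b ^ q) ^ (q⁻¹ - r⁻¹) := by
    have recombine {t : ℝ} (ht : 0 < t) (htr : 0 ≤ t⁻¹ - r⁻¹) (c : ℝ≥0∞) :
        (c ^ t) ^ r⁻¹ * (c ^ t) ^ (t⁻¹ - r⁻¹) = c := by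
      rw [← ENNReal.rpow_add_of_nonneg _ _ (by positivity) htr, add_sub_cancel,
        ENNReal.rpow_rpow_inv ht.ne']
    rw [ENNReal.mul_rpow_of_nonneg _ _ (by positivity), mul_assoc, mul_mul_mul_comm,
      recombine hp0 hpr, recombine hq0 hqr]
  have rpow_weight {t : ℝ} (ht : 0 < t) (w : ι → ℝ≥0∞) :
      ((∑' i, w i ^ t) ^ (t⁻¹ - r⁻¹)) ^ r = eellNorm t w ^ (r - t) := by
    rw [← eellNorm_rpow_self ht.ne', ← ENNReal.rpow_mul, ← ENNReal.rpow_mul]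
    congr 1
    field_simp
  have holder : ∑' i, u i * v i ≤ (∑' i, u i ^ p * v i ^ q) ^ r⁻¹ *
      (∑' i, u i ^ p) ^ (p⁻¹ - r⁻¹) * (∑' i, v i ^ q) ^ (q⁻¹ - r⁻¹) := by
    simp only [factorization (u _)]
    simpa [Fin.prod_univ_three] using tsum_prod_rpow_le Finset.univ
      ![fun i ↦ u i ^ p * v i ^ q, fun i ↦ u i ^ p, fun i ↦ v i ^ q]
      (w := ![r⁻¹, p⁻¹ - r⁻¹, q⁻¹ - r⁻¹])
      (by simpa [Fin.forall_fin_succ] using ⟨hr.le, sub_nonneg.1 hpr, sub_nonneg.1 hqr⟩)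
      (by simp only [Fin.sum_univ_three, Matrix.cons_val]; linarith)
  refine (ENNReal.rpow_le_rpow holder hr.le).trans_eq ?_
  rw [ENNReal.mul_rpow_of_nonneg _ _ hr.le, ENNReal.mul_rpow_of_nonneg _ _ hr.le,
    ENNReal.rpow_inv_rpow hr.ne', rpow_weight hp0, rpow_weight hq0, mul_assoc]

lemma eellNorm_tsum_mul_le (hp : 1 ≤ p) (hq : 1 ≤ q) (hr : 0 < r) (hpqr : p⁻¹ + q⁻¹ = 1 + r⁻¹)
    {K : ι → κ → ℝ≥0∞} {C : ℝ≥0∞} (hrow : ∀ i, eellNorm p (K i) ≤ C)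
    (hcol : ∀ j, eellNorm p (fun i ↦ K i j) ≤ C) (f : κ → ℝ≥0∞) :
    eellNorm r (fun i ↦ ∑' j, K i j * f j) ≤ C * eellNorm q f := by
  have hp0 : 0 < p := by linarith
  have hq0 : 0 < q := by linarith
  have hpr : 0 ≤ r - p := sub_nonneg.2 <|
    (inv_le_inv₀ hr hp0).1 (by linarith [inv_le_one_of_one_le₀ hq])
  have hqr : 0 ≤ r - q := sub_nonneg.2 <|
    (inv_le_inv₀ hr hq0).1 (by linarith [inv_le_one_of_one_le₀ hp])
  have double_sum : ∑' i, ∑' j, K i j ^ p * f j ^ q ≤ C ^ p * eellNorm q f ^ q := by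
    rw [ENNReal.tsum_comm, eellNorm_rpow_self hq0.ne', ← ENNReal.tsum_mul_left]
    simp only [ENNReal.tsum_mul_right]
    gcongr with j
    exact (eellNorm_le_iff hp0).1 (hcol j)
  rw [eellNorm_le_iff hr]
  calc ∑' i, (∑' j, K i j * f j) ^ r
    _ ≤ ∑' i, (∑' j, K i j ^ p * f j ^ q) * (C ^ (r - p) * eellNorm q f ^ (r - q)) := by
      gcongr with i
      refine (tsum_mul_rpow_le hp hq hr hpqr (K i) f).trans ?_
      gcongr
      exact hrow i
    _ ≤ C ^ p * eellNorm q f ^ q * (C ^ (r - p) * eellNorm q f ^ (r - q)) := by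
      rw [ENNReal.tsum_mul_right]
      gcongr
    _ = (C * eellNorm q f) ^ r := by
      rw [mul_mul_mul_comm, ← ENNReal.rpow_add_of_nonneg _ _ hp0.le hpr,
        ← ENNReal.rpow_add_of_nonneg _ _ hq0.le hqr, add_sub_cancel, add_sub_cancel,
        ENNReal.mul_rpow_of_nonneg _ _ hr.le]

variable {G : Type*} [AddGroup G]

lemma eellNorm_conv_le (hp : 1 ≤ p) (hq : 1 ≤ q) (hr : 0 < r) (hpqr : p⁻¹ + q⁻¹ = 1 + r⁻¹)
    (A B : Set G) (Q : G → ℝ≥0∞) (f : B → ℝ≥0∞) :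
    eellNorm r (fun i : A ↦ ∑' j : B, Q (i - j) * f j) ≤ eellNorm p Q * eellNorm q f :=
  have hp0 : 0 ≤ p := by linarith
  eellNorm_tsum_mul_le hp hq hr hpqr
    (fun _ ↦ eellNorm_comp_le hp0 (sub_right_injective.comp Subtype.val_injective) Q)
    (fun _ ↦ eellNorm_comp_le hp0 (sub_left_injective.comp Subtype.val_injective) Q) f

lemma eellNorm_add_conv_rpow_le {s : ℝ} (hs : 1 ≤ s) (S : Set G) (Q : G → ℝ≥0∞) (y : S → ℝ≥0∞) :
    eellNorm (s + 1) (fun i : S ↦ Q i + ∑' j : S, Q (i - j) * y j ^ s) ≤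
      eellNorm (s + 1) (fun i : S ↦ Q i) +
        eellNorm ((s + 1) / 2) Q * eellNorm (s + 1) y ^ s := by
  have hs0 : 0 < s := by linarith
  have young := eellNorm_conv_le (p := (s + 1) / 2) (q := (s + 1) / s) (r := s + 1)
    (by linarith) (by rw [one_le_div hs0]; linarith) (by linarith) (by field_simp; ring)
    S S Q (fun j ↦ y j ^ s)
  rw [eellNorm_rpow hs0.ne', mul_div_cancel₀ _ hs0.ne'] at young
  exact (eellNorm_add_le (by linarith) _ _).trans (by gcongr)

end Young

section RealNorm

variable {ι : Type*} {p : ℝ}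

/-- The `ℓ^p` norm of a real family on an arbitrary index type, with the junk value `0`
(for `0 < p`) where the sum diverges. It covers `normFull`, `normPunct` and `norm0`. -/
def ellNorm (p : ℝ) (x : ι → ℝ) : ℝ :=
  (∑' i, |x i| ^ p) ^ (1 / p)

/-- The nonnegative part of the closed `ε`-ball around `0` in `ℓ^p`. For `p = d + 1` and families on
`ℤ^k ∖ {0}` this is `B_ε(0) ∩ D`. -/
def nonnegBall (p ε : ℝ) : Set (ι → ℝ) :=
  {x | ((Summable fun i ↦ |x i| ^ p) ∧ ∀ i, 0 ≤ x i) ∧ ellNorm p x ≤ ε}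

lemma ellNorm_nonneg (p : ℝ) (x : ι → ℝ) : 0 ≤ ellNorm p x :=
  Real.rpow_nonneg (tsum_nonneg fun i ↦ by positivity) _

lemma ofReal_ellNorm (hp : 0 < p) {x : ι → ℝ} (hx : Summable fun i ↦ |x i| ^ p) :
    ENNReal.ofReal (ellNorm p x) = eellNorm p (fun i ↦ ENNReal.ofReal |x i|) := by
  have hx0 (i : ι) : 0 ≤ |x i| ^ p := by positivity
  rw [ellNorm, eellNorm, ← ENNReal.ofReal_rpow_of_nonneg (tsum_nonneg hx0) (by positivity),
    ENNReal.ofReal_tsum_of_nonneg hx0 hx]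
  simp only [ENNReal.ofReal_rpow_of_nonneg (abs_nonneg _) hp.le]

lemma summable_abs_rpow_of_eellNorm_ne_top (hp : 0 < p) {x : ι → ℝ}
    (hx : eellNorm p (fun i ↦ ENNReal.ofReal |x i|) ≠ ∞) : Summable fun i ↦ |x i| ^ p := by
  have hsum : ∑' i, ENNReal.ofReal |x i| ^ p ≠ ∞ := by
    rw [← eellNorm_rpow_self hp.ne']
    exact ENNReal.rpow_ne_top_of_nonneg hp.le hx
  simpa only [← ENNReal.toReal_rpow, ENNReal.toReal_ofReal (abs_nonneg _)] using
    ENNReal.summable_toReal hsum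

lemma summable_abs_rpow_of_exponent_ge {q : ℝ} (hp : 0 < p) (hpq : p ≤ q) {x : ι → ℝ}
    (hx : Summable fun i ↦ |x i| ^ p) : Summable fun i ↦ |x i| ^ q := by
  have hxp : Memℓp x (ENNReal.ofReal p) :=
    memℓp_gen (by simpa only [ENNReal.toReal_ofReal hp.le, Real.norm_eq_abs] using hx)
  have hq : 0 < q := hp.trans_le hpq
  simpa only [ENNReal.toReal_ofReal hq.le, Real.norm_eq_abs] using
    (memℓp_gen_iff (by rwa [ENNReal.toReal_ofReal hq.le])).1
      (hxp.of_exponent_ge (ENNReal.ofReal_le_ofReal hpq))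

lemma mem_nonnegBall_iff {ε : ℝ} (hp : 0 < p) (hε : 0 ≤ ε) {x : ι → ℝ} (hx : ∀ i, 0 ≤ x i) :
    x ∈ nonnegBall p ε ↔ eellNorm p (fun i ↦ ENNReal.ofReal (x i)) ≤ ENNReal.ofReal ε := by
  have habs : (fun i ↦ ENNReal.ofReal (x i)) = fun i ↦ ENNReal.ofReal |x i| := by
    simp only [abs_of_nonneg (hx _)]
  rw [habs]
  constructor
  · rintro ⟨⟨hsum, -⟩, hle⟩
    rw [← ofReal_ellNorm hp hsum]
    exact ENNReal.ofReal_le_ofReal hle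
  · intro hle
    have hsum := summable_abs_rpow_of_eellNorm_ne_top hp
      (ne_top_of_le_ne_top ENNReal.ofReal_ne_top hle)
    rw [← ofReal_ellNorm hp hsum, ENNReal.ofReal_le_ofReal_iff hε] at hle
    exact ⟨⟨hsum, hx⟩, hle⟩

/-- The case of a divergent real sum is covered by its junk value `0`. -/
lemma ofReal_tsum_le {f : ι → ℝ} (hf : ∀ i, 0 ≤ f i) :
    ENNReal.ofReal (∑' i, f i) ≤ ∑' i, ENNReal.ofReal (f i) := by
  by_cases hsum : Summable f
  · exact (ENNReal.ofReal_tsum_of_nonneg hf hsum).le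
  · simp [tsum_eq_zero_of_not_summable hsum]

lemma tsum_mul_rpow_nonneg {s : ℝ} {a x : ι → ℝ} (ha : ∀ i, 0 ≤ a i) (hx : ∀ i, 0 ≤ x i) :
    0 ≤ ∑' i, a i * x i ^ s :=
  tsum_nonneg fun i ↦ mul_nonneg (ha i) (Real.rpow_nonneg (hx i) s)

end RealNorm

section NormalizedConv

variable {G : Type*} [AddGroup G] {S : Set G} {Q : G → ℝ} {s : ℝ} {x : S → ℝ}

/-- The operator `T` for a family `x` on an arbitrary subset `S` of a group and a real exponent `s`;
`opT` is the case `G = ℤ^k`, `S = ℤ^k ∖ {0}`, `s = d`. -/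
def normalizedConv (Q : G → ℝ) (s : ℝ) (x : S → ℝ) (i : G) : ℝ :=
  (Q i + ∑' j : S, Q (i - j) * x j ^ s) / (1 + ∑' j : S, Q j * x j ^ s)

lemma normalizedConv_nonneg (hQ : ∀ g, 0 ≤ Q g) (hx : ∀ j, 0 ≤ x j) (i : G) :
    0 ≤ normalizedConv Q s x i :=
  div_nonneg (add_nonneg (hQ i) (tsum_mul_rpow_nonneg (fun _ ↦ hQ _) hx))
    (add_nonneg zero_le_one (tsum_mul_rpow_nonneg (fun _ ↦ hQ _) hx))

lemma normalizedConv_le (hQ : ∀ g, 0 ≤ Q g) (hx : ∀ j, 0 ≤ x j) (i : G) :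
    normalizedConv Q s x i ≤ Q i + ∑' j : S, Q (i - j) * x j ^ s :=
  div_le_self (add_nonneg (hQ i) (tsum_mul_rpow_nonneg (fun _ ↦ hQ _) hx))
    (le_add_of_nonneg_right (tsum_mul_rpow_nonneg (fun _ ↦ hQ _) hx))

lemma ofReal_normalizedConv_le (hQ : ∀ g, 0 ≤ Q g) (hs : 0 ≤ s) (hx : ∀ j, 0 ≤ x j) (i : G) :
    ENNReal.ofReal (normalizedConv Q s x i) ≤ ENNReal.ofReal (Q i) +
      ∑' j : S, ENNReal.ofReal (Q (i - j)) * ENNReal.ofReal (x j) ^ s := by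
  refine (ENNReal.ofReal_le_ofReal (normalizedConv_le hQ hx i)).trans ?_
  rw [ENNReal.ofReal_add (hQ i) (tsum_mul_rpow_nonneg (fun _ ↦ hQ _) hx)]
  gcongr
  refine (ofReal_tsum_le fun j ↦ mul_nonneg (hQ _) (Real.rpow_nonneg (hx j) s)).trans_eq ?_
  simp only [ENNReal.ofReal_mul (hQ _), ENNReal.ofReal_rpow_of_nonneg (hx _) hs]

lemma eellNorm_normalizedConv_le (hs : 1 ≤ s) (hQ : ∀ g, 0 ≤ Q g) (hx : ∀ j, 0 ≤ x j) :
    eellNorm (s + 1) (fun i : S ↦ ENNReal.ofReal (normalizedConv Q s x i)) ≤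
      eellNorm (s + 1) (fun i : S ↦ ENNReal.ofReal (Q i)) +
        eellNorm ((s + 1) / 2) (fun g ↦ ENNReal.ofReal (Q g)) *
          eellNorm (s + 1) (fun j ↦ ENNReal.ofReal (x j)) ^ s :=
  (eellNorm_mono (by linarith) fun i : S ↦
    ofReal_normalizedConv_le hQ (zero_le_one.trans hs) hx i).trans
    (eellNorm_add_conv_rpow_le hs S (fun g ↦ ENNReal.ofReal (Q g)) _)

theorem stmt2_general {ε : ℝ} (hs : 1 ≤ s) (hQ : ∀ g, 0 ≤ Q g)
    (hQ_sum : Summable fun g ↦ |Q g| ^ ((s + 1) / 2))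
    (hball : ellNorm (s + 1) (fun i : S ↦ Q i) + ellNorm ((s + 1) / 2) Q * ε ^ s ≤ ε) :
    Set.MapsTo (fun (x : S → ℝ) (i : S) ↦ normalizedConv Q s x i)
      (nonnegBall (s + 1) ε) (nonnegBall (s + 1) ε) := by
  intro x hx
  have hs0 : 0 ≤ s := by linarith
  have hs1 : 0 < s + 1 := by linarith
  have hε : 0 ≤ ε := (ellNorm_nonneg _ x).trans hx.2
  have hx0 : ∀ j, 0 ≤ x j := hx.1.2
  have hx_norm := (mem_nonnegBall_iff hs1 hε hx0).1 hx
  have hδ_sum : Summable fun i : S ↦ |Q i| ^ (s + 1) :=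
    (summable_abs_rpow_of_exponent_ge (half_pos hs1) (by linarith) hQ_sum).subtype S
  have hδ := ofReal_ellNorm hs1 hδ_sum
  have hγ := ofReal_ellNorm (half_pos hs1) hQ_sum
  simp only [abs_of_nonneg (hQ _)] at hδ hγ
  have hT0 (i : S) : 0 ≤ normalizedConv Q s x i := normalizedConv_nonneg hQ hx0 i
  refine (mem_nonnegBall_iff hs1 hε hT0).2 ?_
  calc eellNorm (s + 1) (fun i : S ↦ ENNReal.ofReal (normalizedConv Q s x i))
    _ ≤ ENNReal.ofReal (ellNorm (s + 1) fun i : S ↦ Q i) +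
          ENNReal.ofReal (ellNorm ((s + 1) / 2) Q) *
            eellNorm (s + 1) (fun j ↦ ENNReal.ofReal (x j)) ^ s := by
      rw [hδ, hγ]
      exact eellNorm_normalizedConv_le hs hQ hx0
    _ ≤ ENNReal.ofReal (ellNorm (s + 1) fun i : S ↦ Q i) +
          ENNReal.ofReal (ellNorm ((s + 1) / 2) Q) * ENNReal.ofReal ε ^ s := by gcongr
    _ = ENNReal.ofReal (ellNorm (s + 1) (fun i : S ↦ Q i) + ellNorm ((s + 1) / 2) Q * ε ^ s) := by
      have hγ0 := ellNorm_nonneg ((s + 1) / 2) Q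
      rw [ENNReal.ofReal_add (ellNorm_nonneg _ _) (by positivity), ENNReal.ofReal_mul hγ0,
        ENNReal.ofReal_rpow_of_nonneg hε hs0]
    _ ≤ ENNReal.ofReal ε := ENNReal.ofReal_le_ofReal hball

end NormalizedConv

lemma opT_eq_normalizedConv {k d : ℕ} (Q : ZkL k → ℝ) (x : ZkP k → ℝ) :
    opT k d Q x = normalizedConv (S := {j | j ≠ 0}) Q d x := by
  funext i
  simp only [normalizedConv, Real.rpow_natCast]
  rfl

/-- Proposition 2.8, part 1: invariance of the ε-ball under `T`.
With `γ := ‖Q‖_{(d+1)/2,ℤ^k}` and `δ := ‖Q‖_{d+1,ℤ^k∖{0}}` finite, if `ε > 0` satisfies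
`δ + γ ε^d ≤ ε`, then `T` maps `B_ε(0) ∩ D` into itself. -/
theorem stmt2 (k d : ℕ) (hk : 1 ≤ k) (hd : 2 ≤ d)
    (Q : ZkL k → ℝ) (hQpos : ∀ j, 0 < Q j) (hQ0 : Q 0 = 1)
    (hsum1 : Summable fun j : ZkL k => |Q j| ^ (((d : ℝ) + 1) / 2))
    (hsum2 : Summable fun j : ZkP k => |Q j.1| ^ ((d : ℝ) + 1))
    (ε : ℝ) (hε : 0 < ε)
    (hball : del k d Q + gam k d Q * ε ^ d ≤ ε)
    (x : ZkP k → ℝ) (hx : memD k d x) (hxb : norm0 k ((d : ℝ) + 1) x ≤ ε) :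
    memD k d (fun i : ZkP k => opT k d Q x i.1) ∧
    norm0 k ((d : ℝ) + 1) (fun i : ZkP k => opT k d Q x i.1) ≤ ε := by
  rw [opT_eq_normalizedConv]
  exact stmt2_general (S := {j | j ≠ 0}) (by exact_mod_cast one_le_two.trans hd)
    (fun j ↦ (hQpos j).le) hsum1 ((Real.rpow_natCast ε d).symm ▸ hball) ⟨hx, hxb⟩
end
end

section
/- Existence and uniqueness of a fixed point of T in the good-set regime (core of Theorem 2.3): Set γ := ‖Q‖_{(d+1)/2,ℤ^k} and δ := ‖Q‖_{d+1,ℤ^k∖{0}}. Suppose ε > 0 satisfies both δ + γ ε^d ≤ ε and 2dγ ε^{d−1} + 2dδ ε^d < 1. Then T has a unique fixed point x in the set {x ∈ D : ‖x‖_{d+1,ℤ^k∖{0}} ≤ ε}. -/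
/-!
Write `T x = D(x)⁻¹ N(x)` with `N(x) = Q + Q * x^d` and `D(x) = 1 + ⟨Q, x^d⟩ ≥ 1`. For `x` in
`ℓ^(d+1)` the power `x^d` lies in `ℓ^((d+1)/d)`, so Young's inequality with the exponents
`2/(d+1) + d/(d+1) = 1 + 1/(d+1)` gives `‖T x‖ ≤ δ + γ ‖x‖^d`, and `T` maps the ball of radius `ε`
to itself.

Hölder's inequality and `x^(n+1) - y^(n+1) = x^n (x - y) + (x^n - y^n) y` give
`‖x^d - y^d‖ ≤ d ε^(d-1) ‖x - y‖` on that ball. Since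
`T x - T y = D(x)⁻¹ (N(x) - N(y) - (D(x) - D(y)) T y)`, another use of Young's inequality (for `N`)
and of Hölder's (for `D`) shows that `T` is Lipschitz on the nonnegative part of the ball with
constant `d ε^(d-1) (γ + δ ε) < 1`, and Banach's fixed point theorem applies in `ℓ^(d+1)`.
-/

open scoped BigOperators
open Filter Topology

noncomputable section

open MeasureTheory
open scoped ENNReal NNReal

section Exponents

variable {s q r p : ℝ≥0∞}

theorem one_le_div_natCast {n : ℕ} (hn : 1 ≤ n) (hnp : n ≤ p) : 1 ≤ p / n := by
  rwa [ENNReal.le_div_iff_mul_le (.inl (by simp; lia)) (.inl (by simp)), one_mul]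

theorem ne_top_of_inv_add_inv_eq (hq : 1 ≤ q) (hr : r ≠ ∞) (h : s⁻¹ + q⁻¹ = 1 + r⁻¹) : s ≠ ∞ := by
  rintro rfl
  have hlt : 1 < 1 + r⁻¹ := ENNReal.lt_add_right ENNReal.one_ne_top (ENNReal.inv_ne_zero.2 hr)
  rw [← h, ENNReal.inv_top, zero_add, ENNReal.one_lt_inv] at hlt
  exact hlt.not_ge hq

theorem ne_zero_of_inv_add_inv_eq (hs : 1 ≤ s) (hq : 1 ≤ q) (h : s⁻¹ + q⁻¹ = 1 + r⁻¹) : r ≠ 0 := by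
  rintro rfl
  have hs0 : s ≠ 0 := (one_pos.trans_le hs).ne'
  have hq0 : q ≠ 0 := (one_pos.trans_le hq).ne'
  simp [hs0, hq0] at h

end Exponents

section Powers

variable {α : Type*} [MeasurableSpace α] {μ : Measure α} {p : ℝ≥0∞} {f g : α → ℝ}

theorem eLpNorm_pow_le (hp : p ≠ 0) (f : α → ℝ) (n : ℕ) :
    eLpNorm (f ^ n) (p / n) μ ≤ eLpNorm f p μ ^ n := by
  rcases eq_or_ne n 0 with rfl | hn
  · simpa [ENNReal.div_zero hp] using
      eLpNormEssSup_le_of_ae_enorm_bound (μ := μ) (f := (1 : α → ℝ)) (C := 1) (by simp)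
  · have hn' : (0 : ℝ) < n := by positivity
    have key := eLpNorm_norm_rpow (p := p / n) (μ := μ) f hn'
    rw [ENNReal.ofReal_natCast, ENNReal.div_mul_cancel (by simpa) (by simp),
      ENNReal.rpow_natCast] at key
    rw [← key]
    exact (eLpNorm_congr_norm_ae (by simp)).le

theorem eLpNorm_pow_ne_top (hp : p ≠ 0) (hf : eLpNorm f p μ ≠ ∞) (n : ℕ) :
    eLpNorm (f ^ n) (p / n) μ ≠ ∞ :=
  ((eLpNorm_pow_le hp f n).trans_lt (ENNReal.pow_lt_top hf.lt_top)).ne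

theorem aestronglyMeasurable_of_discrete [DiscreteMeasurableSpace α] (f : α → ℝ) :
    AEStronglyMeasurable f μ :=
  Measurable.of_discrete.aestronglyMeasurable

theorem holderTriple_div_natCast (hp : p ≠ 0) (n : ℕ) :
    ENNReal.HolderTriple (p / n) p (p / (n + 1 : ℕ)) := by
  constructor
  rw [ENNReal.inv_div (by simp) (by simp [hp]), ENNReal.inv_div (by simp) (by simp), ← one_div,
    ENNReal.div_add_div_same]
  push_cast; rfl

theorem eLpNorm_pow_sub_pow_le (hf : AEStronglyMeasurable f μ) (hg : AEStronglyMeasurable g μ)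
    {R : ℝ≥0∞} (hfR : eLpNorm f p μ ≤ R) (hgR : eLpNorm g p μ ≤ R) {n : ℕ} (hn : n ≤ p) :
    eLpNorm (f ^ n - g ^ n) (p / n) μ ≤ n * R ^ (n - 1) * eLpNorm (f - g) p μ := by
  induction n with
  | zero => simp
  | succ n ih =>
    have hp : p ≠ 0 := by rintro rfl; simp at hn
    have : ENNReal.HolderTriple (p / n) p (p / (n + 1 : ℕ)) := holderTriple_div_natCast hp n
    have hsplit : f ^ (n + 1) - g ^ (n + 1) = f ^ n • (f - g) + (f ^ n - g ^ n) • g := by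
      simp only [smul_eq_mul]; ring
    have hp1 : 1 ≤ p / (n + 1 : ℕ) := one_le_div_natCast n.succ_pos hn
    have ih := ih (le_trans (by gcongr; simp) hn)
    have hpow : (n : ℝ≥0∞) * R ^ (n - 1) * R = n * R ^ n := by
      cases n <;> simp [pow_succ, mul_assoc]
    calc eLpNorm (f ^ (n + 1) - g ^ (n + 1)) (p / (n + 1 : ℕ)) μ
        ≤ eLpNorm (f ^ n • (f - g)) (p / (n + 1 : ℕ)) μ
          + eLpNorm ((f ^ n - g ^ n) • g) (p / (n + 1 : ℕ)) μ := by
          rw [hsplit]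
          exact eLpNorm_add_le ((hf.pow n).smul (hf.sub hg))
            (((hf.pow n).sub (hg.pow n)).smul hg) hp1
      _ ≤ eLpNorm (f ^ n) (p / n) μ * eLpNorm (f - g) p μ
          + eLpNorm (f ^ n - g ^ n) (p / n) μ * eLpNorm g p μ := by
          gcongr
          · exact eLpNorm_smul_le_mul_eLpNorm (hf.sub hg) (hf.pow n)
          · exact eLpNorm_smul_le_mul_eLpNorm hg ((hf.pow n).sub (hg.pow n))
      _ ≤ R ^ n * eLpNorm (f - g) p μ + n * R ^ (n - 1) * eLpNorm (f - g) p μ * R := by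
          gcongr
          exact (eLpNorm_pow_le hp f n).trans (by gcongr)
      _ = (n + 1 : ℕ) * R ^ (n + 1 - 1) * eLpNorm (f - g) p μ := by
          rw [mul_right_comm, hpow, Nat.add_sub_cancel]; push_cast; ring

end Powers

section Kernels

theorem lintegral_mul_rpow_le {α : Type*} [MeasurableSpace α] {μ : Measure α} {a z : α → ℝ≥0∞}
    (ha : AEMeasurable a μ) (hz : AEMeasurable z μ) {s q r : ℝ} (hs : 1 ≤ s) (hq : 1 ≤ q)
    (hr : 0 < r) (hsqr : s⁻¹ + q⁻¹ = 1 + r⁻¹) :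
    (∫⁻ t, a t * z t ∂μ) ^ r ≤ (∫⁻ t, a t ^ s * z t ^ q ∂μ) *
      (∫⁻ t, a t ^ s ∂μ) ^ (r / s - 1) * (∫⁻ t, z t ^ q ∂μ) ^ (r / q - 1) := by
  have hrs : r⁻¹ ≤ s⁻¹ := by linarith [inv_le_one_of_one_le₀ hq]
  have hrq : r⁻¹ ≤ q⁻¹ := by linarith [inv_le_one_of_one_le₀ hs]
  -- Hölder for `a z = (a ^ s z ^ q) ^ (1/r) * (a ^ s) ^ (1/s - 1/r) * (z ^ q) ^ (1/q - 1/r)`.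
  let F : Fin 3 → α → ℝ≥0∞ := ![fun t ↦ a t ^ s * z t ^ q, fun t ↦ a t ^ s, fun t ↦ z t ^ q]
  let w : Fin 3 → ℝ := ![r⁻¹, s⁻¹ - r⁻¹, q⁻¹ - r⁻¹]
  have hsplit {e : ℝ} (he : 1 ≤ e) (hre : r⁻¹ ≤ e⁻¹) (y : ℝ≥0∞) :
      (y ^ e) ^ r⁻¹ * (y ^ e) ^ (e⁻¹ - r⁻¹) = y := by
    rw [← ENNReal.rpow_add_of_nonneg _ _ (inv_nonneg.2 hr.le) (sub_nonneg.2 hre),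
      add_sub_cancel, ENNReal.rpow_rpow_inv (by linarith)]
  have hfactor (t : α) : a t * z t = ∏ m, F m t ^ w m := by
    simp only [Fin.prod_univ_three, F, w, Matrix.cons_val,
      ENNReal.mul_rpow_of_nonneg _ _ (inv_nonneg.2 hr.le)]
    rw [mul_assoc, mul_mul_mul_comm, hsplit hs hrs, hsplit hq hrq]
  have holder := ENNReal.lintegral_prod_norm_pow_le (μ := μ) Finset.univ (f := F)
    (by simpa [Fin.forall_fin_succ, F] using
      ⟨(ha.pow_const s).mul (hz.pow_const q), ha.pow_const s, hz.pow_const q⟩) (p := w)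
    (by simp only [Fin.sum_univ_three, w, Matrix.cons_val]; linarith)
    (by simp [Fin.forall_fin_succ, w, hr.le, hrs, hrq])
  simp only [← hfactor, Fin.prod_univ_three, F, w, Matrix.cons_val] at holder
  refine (ENNReal.rpow_le_rpow holder hr.le).trans_eq ?_
  simp only [ENNReal.mul_rpow_of_nonneg _ _ hr.le, ← ENNReal.rpow_mul, sub_mul,
    inv_mul_cancel₀ hr.ne', ENNReal.rpow_one, inv_mul_eq_div]

variable {ι κ : Type*}

theorem tsum_tsum_mul_rpow_le {s q r : ℝ} (hs : 1 ≤ s) (hq : 1 ≤ q) (hr : 0 < r)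
    (hsqr : s⁻¹ + q⁻¹ = 1 + r⁻¹) {a : ι → κ → ℝ≥0∞} {M : ℝ≥0∞} (hrow : ∀ i, ∑' j, a i j ^ s ≤ M)
    (hcol : ∀ j, ∑' i, a i j ^ s ≤ M) (z : κ → ℝ≥0∞) :
    ∑' i, (∑' j, a i j * z j) ^ r ≤ M ^ (r / s) * (∑' j, z j ^ q) ^ (r / q) := by
  set Z := ∑' j, z j ^ q
  have hrs : 0 ≤ r / s - 1 := by
    rw [sub_nonneg, one_le_div (by linarith), ← inv_le_inv₀ hr (by linarith)]
    linarith [inv_le_one_of_one_le₀ hq]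
  have hrq : 0 ≤ r / q - 1 := by
    rw [sub_nonneg, one_le_div (by linarith), ← inv_le_inv₀ hr (by linarith)]
    linarith [inv_le_one_of_one_le₀ hs]
  have hpointwise (i : ι) : (∑' j, a i j * z j) ^ r ≤
      (∑' j, a i j ^ s * z j ^ q) * (M ^ (r / s - 1) * Z ^ (r / q - 1)) := by
    let _ : MeasurableSpace κ := ⊤
    have h := lintegral_mul_rpow_le (μ := Measure.count) (a := a i) (z := z)
      Measurable.of_discrete.aemeasurable Measurable.of_discrete.aemeasurable hs hq hr hsqr
    simp only [lintegral_count] at h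
    refine h.trans ?_
    rw [mul_assoc]
    gcongr
    exact hrow i
  have hmass : ∑' i, ∑' j, a i j ^ s * z j ^ q ≤ M * Z := by
    rw [ENNReal.tsum_comm]
    simp only [ENNReal.tsum_mul_right]
    rw [← ENNReal.tsum_mul_left]
    gcongr with j
    exact hcol j
  have hadd {e : ℝ} (he : 0 ≤ e - 1) (y : ℝ≥0∞) : y * y ^ (e - 1) = y ^ e := by
    nth_rw 1 [← ENNReal.rpow_one y]
    rw [← ENNReal.rpow_add_of_nonneg _ _ zero_le_one he, add_sub_cancel]
  calc ∑' i, (∑' j, a i j * z j) ^ r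
      ≤ ∑' i, (∑' j, a i j ^ s * z j ^ q) * (M ^ (r / s - 1) * Z ^ (r / q - 1)) :=
        ENNReal.tsum_le_tsum hpointwise
    _ ≤ M * Z * (M ^ (r / s - 1) * Z ^ (r / q - 1)) := by
        rw [ENNReal.tsum_mul_right]; gcongr
    _ = M ^ (r / s) * Z ^ (r / q) := by
        rw [mul_mul_mul_comm, hadd hrs, hadd hrq]

end Kernels

section Schur

variable {ι κ : Type*} [MeasurableSpace ι] [MeasurableSingletonClass ι]
  [MeasurableSpace κ] [MeasurableSingletonClass κ]

theorem eLpNorm_count_rpow {E : Type*} [ENorm E] {p : ℝ≥0∞}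
    (hp : p ≠ 0) (hp' : p ≠ ∞) (f : ι → E) :
    eLpNorm f p .count ^ p.toReal = ∑' i, ‖f i‖ₑ ^ p.toReal := by
  rw [eLpNorm_eq_lintegral_rpow_enorm_toReal hp hp', lintegral_count, one_div,
    ENNReal.rpow_inv_rpow (ENNReal.toReal_pos hp hp').ne']

/-- The hypothesis of Schur's test and of Young's inequality: all rows and all columns of the matrix
`A` have `ℓ^s` norm at most `C`. -/
structure IsSchurBound (A : ι → κ → ℝ) (s C : ℝ≥0∞) : Prop where
  row_le (i : ι) : eLpNorm (A i) s .count ≤ C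
  col_le (j : κ) : eLpNorm (A · j) s .count ≤ C

namespace IsSchurBound

variable {s q r : ℝ≥0∞} {A : ι → κ → ℝ} {C : ℝ≥0∞}

theorem eLpNorm_tsum_enorm_mul_le (hA : IsSchurBound A s C) (hs : 1 ≤ s) (hq : 1 ≤ q)
    (hr : r ≠ ∞) (hsqr : s⁻¹ + q⁻¹ = 1 + r⁻¹) (z : κ → ℝ) :
    eLpNorm (fun i ↦ ∑' j, ‖A i j * z j‖ₑ) r .count ≤ C * eLpNorm z q .count := by
  have hs' : s ≠ ∞ := ne_top_of_inv_add_inv_eq hq hr hsqr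
  have hq' : q ≠ ∞ := ne_top_of_inv_add_inv_eq hs hr (by rwa [add_comm])
  have hr0 : r ≠ 0 := ne_zero_of_inv_add_inv_eq hs hq hsqr
  have hs0 : s ≠ 0 := (one_pos.trans_le hs).ne'
  have hq0 : q ≠ 0 := (one_pos.trans_le hq).ne'
  have hrpos : 0 < r.toReal := ENNReal.toReal_pos hr0 hr
  have hsqr' : s.toReal⁻¹ + q.toReal⁻¹ = 1 + r.toReal⁻¹ := by
    simpa [ENNReal.toReal_add, hs0, hq0, hr0] using congrArg ENNReal.toReal hsqr
  have key := tsum_tsum_mul_rpow_le (ENNReal.toReal_mono hs' hs) (ENNReal.toReal_mono hq' hq)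
    hrpos hsqr' (a := fun i j ↦ ‖A i j‖ₑ) (z := fun j ↦ ‖z j‖ₑ) (M := C ^ s.toReal)
    (fun i ↦ by rw [← eLpNorm_count_rpow hs0 hs']; gcongr; exact hA.row_le i)
    (fun j ↦ by rw [← eLpNorm_count_rpow hs0 hs' (A · j)]; gcongr; exact hA.col_le j)
  rw [← eLpNorm_count_rpow hq0 hq' z, ← ENNReal.rpow_mul, ← ENNReal.rpow_mul,
    mul_div_cancel₀ _ (ENNReal.toReal_pos hs0 hs').ne',
    mul_div_cancel₀ _ (ENNReal.toReal_pos hq0 hq').ne',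
    ← ENNReal.mul_rpow_of_nonneg _ _ hrpos.le] at key
  rw [← ENNReal.rpow_le_rpow_iff hrpos, eLpNorm_count_rpow hr0 hr]
  simpa only [enorm_mul, enorm_eq_self] using key

theorem eLpNorm_tsum_mul_le (hA : IsSchurBound A s C) (hs : 1 ≤ s) (hq : 1 ≤ q)
    (hr : r ≠ ∞) (hsqr : s⁻¹ + q⁻¹ = 1 + r⁻¹) (z : κ → ℝ) :
    eLpNorm (fun i ↦ ∑' j, A i j * z j) r .count ≤ C * eLpNorm z q .count :=
  (eLpNorm_mono_enorm fun i ↦ enorm_tsum_le_tsum_enorm (f := fun j ↦ A i j * z j)).trans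
    (hA.eLpNorm_tsum_enorm_mul_le hs hq hr hsqr z)

theorem summable_mul (hA : IsSchurBound A s C) (hC : C ≠ ∞) (hs : 1 ≤ s) (hq : 1 ≤ q)
    (hr : r ≠ ∞) (hsqr : s⁻¹ + q⁻¹ = 1 + r⁻¹) {z : κ → ℝ} (hz : eLpNorm z q .count ≠ ∞) (i : ι) :
    Summable fun j ↦ A i j * z j := by
  have h := (enorm_le_eLpNorm_count (fun i ↦ ∑' j, ‖A i j * z j‖ₑ) i
    (ne_zero_of_inv_add_inv_eq hs hq hsqr)).trans (hA.eLpNorm_tsum_enorm_mul_le hs hq hr hsqr z)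
  exact .of_enorm (h.trans_lt (ENNReal.mul_lt_top hC.lt_top hz.lt_top)).ne

end IsSchurBound

section Holder

variable [DiscreteMeasurableSpace ι] {p q : ℝ≥0∞}

theorem tsum_enorm_mul_le [p.HolderConjugate q] (c z : ι → ℝ) :
    ∑' j, ‖c j * z j‖ₑ ≤ eLpNorm c p .count * eLpNorm z q .count := by
  have h : eLpNorm (c • z) 1 .count ≤ eLpNorm c p .count * eLpNorm z q .count :=
    eLpNorm_smul_le_mul_eLpNorm (aestronglyMeasurable_of_discrete z)
      (aestronglyMeasurable_of_discrete c)
  rwa [eLpNorm_one_eq_lintegral_enorm, lintegral_count] at h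

theorem summable_mul_of_holderConjugate [p.HolderConjugate q] {c z : ι → ℝ}
    (hc : eLpNorm c p .count ≠ ∞) (hz : eLpNorm z q .count ≠ ∞) : Summable fun j ↦ c j * z j :=
  .of_enorm ((tsum_enorm_mul_le c z).trans_lt (ENNReal.mul_lt_top hc.lt_top hz.lt_top)).ne

end Holder

end Schur

section Quotient

theorem enorm_inv_le_one {a : ℝ} (ha : 1 ≤ a) : ‖a⁻¹‖ₑ ≤ 1 := by
  rw [Real.enorm_eq_ofReal_abs, ENNReal.ofReal_le_one, abs_inv, abs_of_pos (by linarith)]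
  exact inv_le_one_of_one_le₀ ha

theorem eLpNorm_inv_smul_sub_inv_smul_le {α E : Type*} [MeasurableSpace α] {μ : Measure α}
    [NormedAddCommGroup E] [NormedSpace ℝ E] {p : ℝ≥0∞} (hp : 1 ≤ p) {u v : α → E}
    (hu : AEStronglyMeasurable u μ) (hv : AEStronglyMeasurable v μ) {a b : ℝ} (ha : 1 ≤ a)
    (hb : b ≠ 0) :
    eLpNorm (a⁻¹ • u - b⁻¹ • v) p μ ≤
      eLpNorm (u - v) p μ + ‖a - b‖ₑ * eLpNorm (b⁻¹ • v) p μ := by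
  have hsplit : a⁻¹ • u - b⁻¹ • v = a⁻¹ • ((u - v) - (a - b) • b⁻¹ • v) := by
    have ha0 : a ≠ 0 := by linarith
    match_scalars <;> field_simp; ring
  calc eLpNorm (a⁻¹ • u - b⁻¹ • v) p μ
      = ‖a⁻¹‖ₑ * eLpNorm ((u - v) - (a - b) • b⁻¹ • v) p μ := by
        rw [hsplit, eLpNorm_const_smul]
    _ ≤ eLpNorm ((u - v) - (a - b) • b⁻¹ • v) p μ := mul_le_of_le_one_left' (enorm_inv_le_one ha)
    _ ≤ eLpNorm (u - v) p μ + eLpNorm ((a - b) • b⁻¹ • v) p μ :=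
        eLpNorm_sub_le (hu.sub hv) ((hv.const_smul _).const_smul _) hp
    _ = eLpNorm (u - v) p μ + ‖a - b‖ₑ * eLpNorm (b⁻¹ • v) p μ := by
        rw [eLpNorm_const_smul _ (b⁻¹ • v)]

end Quotient

section FixedPoint

variable {ι : Type*} [MeasurableSpace ι] {p : ℝ≥0∞}

theorem toLp_count_apply {x : ι → ℝ} (hx : MemLp x p .count) : ⇑(hx.toLp x) = x :=
  funext (Measure.ae_count_iff.1 hx.coeFn_toLp)

variable [Fact (1 ≤ p)]

theorem continuous_coeFn_Lp_count [MeasurableSingletonClass ι] :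
    Continuous fun u : Lp ℝ p (.count : Measure ι) ↦ (u : ι → ℝ) := by
  have hp : p ≠ 0 := (one_pos.trans_le Fact.out).ne'
  refine continuous_pi fun i ↦ LipschitzWith.continuous (K := 1) fun u v ↦ ?_
  rw [ENNReal.coe_one, one_mul, edist_eq_enorm_sub, Lp.edist_def]
  exact enorm_le_eLpNorm_count (⇑u - ⇑v) i hp

theorem isClosed_setOf_coeFn_nonneg_and_eLpNorm_le [MeasurableSingletonClass ι] (R : ℝ≥0∞) :
    IsClosed {u : Lp ℝ p (.count : Measure ι) | 0 ≤ (u : ι → ℝ) ∧ eLpNorm u p .count ≤ R} := by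
  simp only [← Lp.enorm_def]
  exact (isClosed_le continuous_const continuous_coeFn_Lp_count).inter
    (isClosed_le continuous_enorm continuous_const)

variable [DiscreteMeasurableSpace ι]

theorem existsUnique_apply_eq_of_eLpNorm_sub_le {S : Set (ι → ℝ)}
    (hS : IsClosed {u : Lp ℝ p (.count : Measure ι) | ⇑u ∈ S})
    (hfin : ∀ x ∈ S, eLpNorm x p .count ≠ ∞) (hne : S.Nonempty)
    {T : (ι → ℝ) → ι → ℝ} (hmaps : Set.MapsTo T S S) {K : ℝ≥0∞} (hK : K < 1)
    (hlip : ∀ x ∈ S, ∀ y ∈ S, eLpNorm (T x - T y) p .count ≤ K * eLpNorm (x - y) p .count) :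
    ∃! x, x ∈ S ∧ T x = x := by
  have hmem {x : ι → ℝ} (hx : x ∈ S) : MemLp x p .count :=
    ⟨aestronglyMeasurable_of_discrete x, (hfin x hx).lt_top⟩
  let B : Set (Lp ℝ p (.count : Measure ι)) := {u | ⇑u ∈ S}
  have : CompleteSpace B := hS.completeSpace_coe
  have hlift {x : ι → ℝ} (hx : x ∈ S) : (hmem hx).toLp x ∈ B := by
    simpa only [B, Set.mem_ofPred_eq, toLp_count_apply] using hx
  have : Nonempty B := hne.elim fun x hx ↦ ⟨⟨_, hlift hx⟩⟩
  let T' (u : B) : B := ⟨_, hlift (hmaps u.2)⟩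
  have hcoe (u : B) : ⇑(T' u).1 = T u := toLp_count_apply (hmem (hmaps u.2))
  have hT' : ContractingWith K.toNNReal T' := by
    have hK' : (K.toNNReal : ℝ≥0∞) = K := ENNReal.coe_toNNReal hK.ne_top
    refine ⟨by rwa [← ENNReal.coe_lt_one_iff, hK'], fun u v ↦ ?_⟩
    rw [hK', Subtype.edist_eq, Subtype.edist_eq, Lp.edist_def, Lp.edist_def, hcoe, hcoe]
    exact hlip _ u.2 _ v.2
  refine ⟨hT'.fixedPoint, ⟨hT'.fixedPoint.2, ?_⟩, fun x ⟨hx, hTx⟩ ↦ ?_⟩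
  · rw [← hcoe, hT'.fixedPoint_isFixedPt]
  · have hfix : Function.IsFixedPt T' ⟨_, hlift hx⟩ :=
      Subtype.ext (Lp.ext (Measure.ae_count_iff.2 fun i ↦ by
        rw [hcoe, toLp_count_apply, hTx]))
    rw [← hT'.fixedPoint_unique hfix, toLp_count_apply]

end FixedPoint

section RatioMap

variable {ι : Type*}

/-- The normalised polynomial map `x ↦ (b + A x^d) / (1 + c · x^d)` of sequences, where `x^d` is the
entrywise power, `A` acts as a matrix and the scalar `1 + c · x^d` divides every entry. The operator
`T` is the case of the convolution kernel `A i j = Q (i - j)` with `b = c = Q`, off the origin. -/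
def ratioMap (d : ℕ) (A : ι → ι → ℝ) (b c x : ι → ℝ) (i : ι) : ℝ :=
  (b i + ∑' j, A i j * x j ^ d) / (1 + ∑' j, c j * x j ^ d)

variable {d : ℕ} {A : ι → ι → ℝ} {b c x y : ι → ℝ}

theorem ratioMap_eq_inv_smul (d : ℕ) (A : ι → ι → ℝ) (b c x : ι → ℝ) :
    ratioMap d A b c x =
      (1 + ∑' j, c j * (x ^ d) j)⁻¹ • (b + fun i ↦ ∑' j, A i j * (x ^ d) j) :=
  funext fun _ ↦ div_eq_inv_mul _ _

theorem one_le_one_add_tsum_mul_pow (hc : 0 ≤ c) (hx : 0 ≤ x) (d : ℕ) :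
    1 ≤ 1 + ∑' j, c j * (x ^ d) j :=
  le_add_of_nonneg_right (tsum_nonneg fun j ↦ mul_nonneg (hc j) (pow_nonneg (hx j) d))

theorem ratioMap_nonneg (hA : ∀ i, 0 ≤ A i) (hb : 0 ≤ b) (hc : 0 ≤ c) (hx : 0 ≤ x) :
    0 ≤ ratioMap d A b c x := fun i ↦
  div_nonneg (add_nonneg (hb i) (tsum_nonneg fun j ↦ mul_nonneg (hA i j) (pow_nonneg (hx j) d)))
    (zero_le_one.trans (one_le_one_add_tsum_mul_pow hc hx d))

variable [MeasurableSpace ι] [DiscreteMeasurableSpace ι] {p s t C R : ℝ≥0∞}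

theorem eLpNorm_ratioMap_le (hd : 1 ≤ d) (hdp : d ≤ p) (hp : p ≠ ∞) (hs : 1 ≤ s)
    (hspd : s⁻¹ + (p / d)⁻¹ = 1 + p⁻¹) (hA : IsSchurBound A s C) (hc : 0 ≤ c) (hx : 0 ≤ x) :
    eLpNorm (ratioMap d A b c x) p .count ≤ eLpNorm b p .count + C * eLpNorm x p .count ^ d := by
  have hp1 : 1 ≤ p := (Nat.one_le_cast.2 hd).trans hdp
  set D := 1 + ∑' j, c j * (x ^ d) j
  have hD : ‖D⁻¹‖ₑ ≤ 1 := enorm_inv_le_one (one_le_one_add_tsum_mul_pow hc hx d)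
  calc eLpNorm (ratioMap d A b c x) p .count
      = ‖D⁻¹‖ₑ * eLpNorm (b + fun i ↦ ∑' j, A i j * (x ^ d) j) p .count := by
        rw [ratioMap_eq_inv_smul, eLpNorm_const_smul]
    _ ≤ eLpNorm (b + fun i ↦ ∑' j, A i j * (x ^ d) j) p .count := mul_le_of_le_one_left' hD
    _ ≤ eLpNorm b p .count + eLpNorm (fun i ↦ ∑' j, A i j * (x ^ d) j) p .count :=
        eLpNorm_add_le (aestronglyMeasurable_of_discrete _) (aestronglyMeasurable_of_discrete _) hp1
    _ ≤ eLpNorm b p .count + C * eLpNorm (x ^ d) (p / d) .count := by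
        gcongr
        exact hA.eLpNorm_tsum_mul_le hs (one_le_div_natCast hd hdp) hp hspd _
    _ ≤ eLpNorm b p .count + C * eLpNorm x p .count ^ d := by
        gcongr
        exact eLpNorm_pow_le (one_pos.trans_le hp1).ne' x d

theorem eLpNorm_tsum_mul_pow_sub_le (hd : 1 ≤ d) (hdp : d ≤ p) (hp : p ≠ ∞) (hs : 1 ≤ s)
    (hspd : s⁻¹ + (p / d)⁻¹ = 1 + p⁻¹) (hA : IsSchurBound A s C) (hC : C ≠ ∞) (hR : R ≠ ∞)
    (hx : eLpNorm x p .count ≤ R) (hy : eLpNorm y p .count ≤ R) :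
    eLpNorm (fun i ↦ ∑' j, A i j * (x ^ d) j - ∑' j, A i j * (y ^ d) j) p .count ≤
      C * (d * R ^ (d - 1) * eLpNorm (x - y) p .count) := by
  have hp0 : p ≠ 0 := (one_pos.trans_le ((Nat.one_le_cast.2 hd).trans hdp)).ne'
  have hpd : 1 ≤ p / d := one_le_div_natCast hd hdp
  have hsum {z : ι → ℝ} (hz : eLpNorm z p .count ≤ R) (i : ι) :=
    hA.summable_mul hC hs hpd hp hspd (eLpNorm_pow_ne_top hp0 (ne_top_of_le_ne_top hR hz) d) i
  simp only [← (hsum hx _).tsum_sub (hsum hy _), ← mul_sub]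
  refine (hA.eLpNorm_tsum_mul_le hs hpd hp hspd (x ^ d - y ^ d)).trans ?_
  gcongr
  exact eLpNorm_pow_sub_pow_le (aestronglyMeasurable_of_discrete x)
    (aestronglyMeasurable_of_discrete y) hx hy hdp

theorem enorm_tsum_mul_pow_sub_le (hd : 1 ≤ d) (hdp : d ≤ p) [t.HolderConjugate (p / d)]
    (hc : eLpNorm c t .count ≠ ∞) (hR : R ≠ ∞)
    (hx : eLpNorm x p .count ≤ R) (hy : eLpNorm y p .count ≤ R) :
    ‖∑' j, c j * (x ^ d) j - ∑' j, c j * (y ^ d) j‖ₑ ≤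
      eLpNorm c t .count * (d * R ^ (d - 1) * eLpNorm (x - y) p .count) := by
  have hp0 : p ≠ 0 := (one_pos.trans_le ((Nat.one_le_cast.2 hd).trans hdp)).ne'
  have hsum {z : ι → ℝ} (hz : eLpNorm z p .count ≤ R) : Summable fun j ↦ c j * (z ^ d) j :=
    summable_mul_of_holderConjugate (q := p / d) hc
      (eLpNorm_pow_ne_top hp0 (ne_top_of_le_ne_top hR hz) d)
  simp only [← (hsum hx).tsum_sub (hsum hy), ← mul_sub]
  refine (enorm_tsum_le_tsum_enorm.trans
    (tsum_enorm_mul_le (p := t) (q := p / d) c (x ^ d - y ^ d))).trans ?_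
  gcongr
  exact eLpNorm_pow_sub_pow_le (aestronglyMeasurable_of_discrete x)
    (aestronglyMeasurable_of_discrete y) hx hy hdp

theorem eLpNorm_ratioMap_sub_ratioMap_le (hd : 1 ≤ d) (hdp : d ≤ p) (hp : p ≠ ∞) (hs : 1 ≤ s)
    (hspd : s⁻¹ + (p / d)⁻¹ = 1 + p⁻¹) [t.HolderConjugate (p / d)] (hA : IsSchurBound A s C)
    (hC : C ≠ ∞) (hc : 0 ≤ c) (hct : eLpNorm c t .count ≠ ∞) (hR : R ≠ ∞)
    (hx : 0 ≤ x) (hy : 0 ≤ y) (hxR : eLpNorm x p .count ≤ R) (hyR : eLpNorm y p .count ≤ R)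
    (hTyR : eLpNorm (ratioMap d A b c y) p .count ≤ R) :
    eLpNorm (ratioMap d A b c x - ratioMap d A b c y) p .count ≤
      d * R ^ (d - 1) * (C + eLpNorm c t .count * R) * eLpNorm (x - y) p .count := by
  have hp1 : 1 ≤ p := (Nat.one_le_cast.2 hd).trans hdp
  have hDy : 1 + ∑' j, c j * (y ^ d) j ≠ 0 :=
    (one_pos.trans_le (one_le_one_add_tsum_mul_pow hc hy d)).ne'
  have hquot := eLpNorm_inv_smul_sub_inv_smul_le (μ := .count) hp1
    (aestronglyMeasurable_of_discrete (b + fun i ↦ ∑' j, A i j * (x ^ d) j))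
    (aestronglyMeasurable_of_discrete (b + fun i ↦ ∑' j, A i j * (y ^ d) j))
    (one_le_one_add_tsum_mul_pow hc hx d) hDy
  rw [← ratioMap_eq_inv_smul, ← ratioMap_eq_inv_smul, add_sub_add_left_eq_sub,
    add_sub_add_left_eq_sub] at hquot
  set N := d * R ^ (d - 1) * eLpNorm (x - y) p .count
  calc eLpNorm (ratioMap d A b c x - ratioMap d A b c y) p .count
      ≤ C * N + eLpNorm c t .count * N * R := by
        refine hquot.trans ?_
        gcongr
        · exact eLpNorm_tsum_mul_pow_sub_le hd hdp hp hs hspd hA hC hR hxR hyR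
        · exact enorm_tsum_mul_pow_sub_le hd hdp hct hR hxR hyR
    _ = d * R ^ (d - 1) * (C + eLpNorm c t .count * R) * eLpNorm (x - y) p .count := by
        simp only [N]; ring

theorem existsUnique_ratioMap_eq (hd : 1 ≤ d) (hdp : d ≤ p) (hp : p ≠ ∞) (hs : 1 ≤ s)
    (hspd : s⁻¹ + (p / d)⁻¹ = 1 + p⁻¹) [t.HolderConjugate (p / d)] (hA : IsSchurBound A s C)
    (hC : C ≠ ∞) (hA0 : ∀ i, 0 ≤ A i) (hb : 0 ≤ b) (hc : 0 ≤ c) (hct : eLpNorm c t .count ≠ ∞)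
    (hR : R ≠ ∞) (hball : eLpNorm b p .count + C * R ^ d ≤ R)
    (hcontr : d * R ^ (d - 1) * (C + eLpNorm c t .count * R) < 1) :
    ∃! x, (0 ≤ x ∧ eLpNorm x p .count ≤ R) ∧ ratioMap d A b c x = x := by
  have : Fact (1 ≤ p) := ⟨(Nat.one_le_cast.2 hd).trans hdp⟩
  let S : Set (ι → ℝ) := {x | 0 ≤ x ∧ eLpNorm x p .count ≤ R}
  have hmaps : Set.MapsTo (ratioMap d A b c) S S := fun x ⟨hx, hxR⟩ ↦
    ⟨ratioMap_nonneg hA0 hb hc hx,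
      ((eLpNorm_ratioMap_le hd hdp hp hs hspd hA hc hx).trans (by gcongr)).trans hball⟩
  exact existsUnique_apply_eq_of_eLpNorm_sub_le (S := S)
    (isClosed_setOf_coeFn_nonneg_and_eLpNorm_le R) (fun _ hx ↦ ne_top_of_le_ne_top hR hx.2)
    ⟨0, le_rfl, by simp⟩ hmaps hcontr fun _ hx _ hy ↦
      eLpNorm_ratioMap_sub_ratioMap_le hd hdp hp hs hspd hA hC hc hct hR hx.1 hy.1 hx.2 hy.2
        (hmaps hy).2

end RatioMap

section SequenceNorm

variable {ι κ : Type*}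

theorem summable_abs_rpow_of_le {p q : ℝ} (hp : 0 < p) (hpq : p ≤ q) {f : ι → ℝ}
    (hf : Summable fun i ↦ |f i| ^ p) : Summable fun i ↦ |f i| ^ q := by
  have hq : 0 < q := hp.trans_le hpq
  have hmem : Memℓp f (ENNReal.ofReal p) := memℓp_gen (by simpa [hp.le] using hf)
  simpa [hq.le] using (hmem.of_exponent_ge (ENNReal.ofReal_le_ofReal hpq)).summable
    (by simpa [hq.le] using hq)

variable [MeasurableSpace ι] [MeasurableSingletonClass ι] [MeasurableSpace κ]
  [MeasurableSingletonClass κ] {p : ℝ≥0∞}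

theorem eLpNorm_count_le_coe_iff (hp : p ≠ 0) (hp' : p ≠ ∞) {f : ι → ℝ} {M : ℝ≥0} :
    eLpNorm f p .count ≤ M ↔ (Summable fun i ↦ |f i| ^ p.toReal) ∧
      (∑' i, |f i| ^ p.toReal) ^ (1 / p.toReal) ≤ M := by
  have hpos : 0 < p.toReal := ENNReal.toReal_pos hp hp'
  have hnorm (i : ι) : ‖f i‖ₑ ^ p.toReal = ENNReal.ofReal (|f i| ^ p.toReal) := by
    rw [Real.enorm_eq_ofReal_abs, ENNReal.ofReal_rpow_of_nonneg (abs_nonneg _) hpos.le]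
  have hnn (i : ι) : 0 ≤ |f i| ^ p.toReal := by positivity
  have heq (h : Summable fun i ↦ |f i| ^ p.toReal) :
      eLpNorm f p .count = ENNReal.ofReal ((∑' i, |f i| ^ p.toReal) ^ (1 / p.toReal)) := by
    rw [eLpNorm_eq_lintegral_rpow_enorm_toReal hp hp', lintegral_count,
      ← ENNReal.ofReal_rpow_of_nonneg (tsum_nonneg hnn) (by positivity),
      ENNReal.ofReal_tsum_of_nonneg hnn h]
    simp only [hnorm]
  have hsum (h : eLpNorm f p .count ≤ M) : Summable fun i ↦ |f i| ^ p.toReal := by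
    have hfin : ∑' i, ‖f i‖ₑ ^ p.toReal ≠ ∞ := by
      rw [← eLpNorm_count_rpow hp hp']
      exact ENNReal.rpow_ne_top_of_nonneg hpos.le (ne_top_of_le_ne_top ENNReal.coe_ne_top h)
    simpa only [hnorm, ENNReal.toReal_ofReal (hnn _)] using ENNReal.summable_toReal hfin
  constructor
  · intro h
    refine ⟨hsum h, ?_⟩
    rwa [heq (hsum h), ENNReal.ofReal_le_iff_le_toReal ENNReal.coe_ne_top] at h
  · rintro ⟨h, hle⟩
    rwa [heq h, ENNReal.ofReal_le_iff_le_toReal ENNReal.coe_ne_top]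

theorem eLpNorm_count_comp_le_of_injective (hp : p ≠ 0) (hp' : p ≠ ∞) (f : κ → ℝ) {φ : ι → κ}
    (hφ : φ.Injective) : eLpNorm (fun i ↦ f (φ i)) p .count ≤ eLpNorm f p .count := by
  rw [← ENNReal.rpow_le_rpow_iff (ENNReal.toReal_pos hp hp'), eLpNorm_count_rpow hp hp',
    eLpNorm_count_rpow hp hp']
  exact ENNReal.tsum_comp_le_tsum_of_injective hφ fun k ↦ ‖f k‖ₑ ^ p.toReal

end SequenceNorm

section Convolution

theorem discreteMeasurableSpace_subtype {α : Type*} [MeasurableSpace α]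
    [DiscreteMeasurableSpace α] (P : α → Prop) : DiscreteMeasurableSpace {a // P a} where
  forall_measurableSet s := ⟨(↑) '' s, .of_discrete, Set.preimage_image_eq s Subtype.val_injective⟩

theorem isSchurBound_sub {G : Type*} [AddGroup G] [MeasurableSpace G] [MeasurableSingletonClass G]
    {Q : G → ℝ} {p C : ℝ≥0∞} (hp : p ≠ 0) (hp' : p ≠ ∞) (hQ : eLpNorm Q p .count ≤ C)
    (P : G → Prop) : IsSchurBound (fun i j : {g // P g} ↦ Q (i - j)) p C where
  row_le _ := (eLpNorm_count_comp_le_of_injective hp hp' Q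
    (sub_right_injective.comp Subtype.val_injective)).trans hQ
  col_le _ := (eLpNorm_count_comp_le_of_injective hp hp' Q
    (sub_left_injective.comp Subtype.val_injective)).trans hQ

theorem inv_succ_div_two_add_inv_succ_div_self (d : ℕ) :
    (((d : ℝ≥0∞) + 1) / 2)⁻¹ + (((d : ℝ≥0∞) + 1) / d)⁻¹ = 1 + ((d : ℝ≥0∞) + 1)⁻¹ := by
  rw [ENNReal.inv_div (by simp) (by simp), ENNReal.inv_div (by simp) (by simp)]
  calc 2 / ((d : ℝ≥0∞) + 1) + d / (d + 1) = (d + 1) / (d + 1) + 1 / (d + 1) := by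
        rw [ENNReal.div_add_div_same, ENNReal.div_add_div_same, ← one_add_one_eq_two]; ring_nf
    _ = 1 + ((d : ℝ≥0∞) + 1)⁻¹ := by rw [ENNReal.div_self (by simp) (by simp), one_div]

theorem holderConjugate_succ_succ_div_self (d : ℕ) :
    ENNReal.HolderConjugate ((d : ℝ≥0∞) + 1) (((d : ℝ≥0∞) + 1) / d) := by
  constructor
  rw [ENNReal.inv_div (by simp) (by simp), ← one_div, ← ENNReal.add_div, add_comm,
    ENNReal.div_self (by simp) (by simp), inv_one]

variable {G : Type*} [AddGroup G] {d : ℕ} {Q : G → ℝ}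

theorem existsUnique_ratioMap_sub_eq [MeasurableSpace G] [DiscreteMeasurableSpace G]
    (hd : 1 ≤ d) (hQ : 0 ≤ Q) {γ δ ε : ℝ≥0}
    (hγ : eLpNorm Q (((d : ℝ≥0∞) + 1) / 2) .count ≤ γ)
    (hδ : eLpNorm (fun j : {g : G // g ≠ 0} ↦ Q j) ((d : ℝ≥0∞) + 1) .count ≤ δ)
    (hball : δ + γ * ε ^ d ≤ ε) (hcontr : d * ε ^ (d - 1) * (γ + δ * ε) < 1) :
    ∃! x : {g : G // g ≠ 0} → ℝ, (0 ≤ x ∧ eLpNorm x ((d : ℝ≥0∞) + 1) .count ≤ ε) ∧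
      ratioMap d (fun i j : {g : G // g ≠ 0} ↦ Q (i - j)) (fun i ↦ Q i) (fun j ↦ Q j) x = x := by
  have hs : 1 ≤ ((d : ℝ≥0∞) + 1) / 2 := by
    rw [ENNReal.le_div_iff_mul_le (by simp) (by simp)]; norm_cast; lia
  have hs' : ((d : ℝ≥0∞) + 1) / 2 ≠ ∞ := by simp [ENNReal.div_eq_top]
  have hA := isSchurBound_sub (one_pos.trans_le hs).ne' hs' hγ (· ≠ 0)
  have := holderConjugate_succ_succ_div_self d
  have := discreteMeasurableSpace_subtype fun g : G ↦ g ≠ 0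
  refine existsUnique_ratioMap_eq (R := ε) hd (by simp) (by simp) hs
    (inv_succ_div_two_add_inv_succ_div_self d) hA (by simp) (fun _ _ ↦ hQ _) (fun _ ↦ hQ _)
    (fun _ ↦ hQ _) (ne_top_of_le_ne_top (by simp) hδ) (by simp) ?_ ?_
  · calc _ ≤ (δ : ℝ≥0∞) + γ * ε ^ d := by gcongr
      _ ≤ ε := mod_cast hball
  · calc _ ≤ (d : ℝ≥0∞) * ε ^ (d - 1) * (γ + δ * ε) := by gcongr
      _ < 1 := mod_cast hcontr

theorem stmt4_general (hd : 1 ≤ d) (hQ : 0 ≤ Q)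
    (hsum : Summable fun g ↦ |Q g| ^ (((d : ℝ) + 1) / 2)) {γ δ ε : ℝ}
    (hγ : (∑' g, |Q g| ^ (((d : ℝ) + 1) / 2)) ^ (1 / (((d : ℝ) + 1) / 2)) ≤ γ)
    (hδ : (∑' g : {g : G // g ≠ 0}, |Q g| ^ ((d : ℝ) + 1)) ^ (1 / ((d : ℝ) + 1)) ≤ δ)
    (hε : 0 ≤ ε) (hball : δ + γ * ε ^ d ≤ ε) (hcontr : d * ε ^ (d - 1) * (γ + δ * ε) < 1) :
    ∃! x : {g : G // g ≠ 0} → ℝ,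
      (((Summable fun j ↦ |x j| ^ ((d : ℝ) + 1)) ∧ ∀ j, 0 ≤ x j) ∧
        (∑' j, |x j| ^ ((d : ℝ) + 1)) ^ (1 / ((d : ℝ) + 1)) ≤ ε) ∧
      ∀ i : {g : G // g ≠ 0},
        (Q i + ∑' j : {g : G // g ≠ 0}, Q (i - j) * x j ^ d) /
          (1 + ∑' j : {g : G // g ≠ 0}, Q j * x j ^ d) = x i := by
  let _ : MeasurableSpace G := ⊤
  lift γ to ℝ≥0 using (by positivity : (0 : ℝ) ≤ _).trans hγ
  lift δ to ℝ≥0 using (by positivity : (0 : ℝ) ≤ _).trans hδ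
  lift ε to ℝ≥0 using hε
  have hd' : (1 : ℝ) ≤ d := Nat.one_le_cast.2 hd
  have hs : (((d : ℝ≥0∞) + 1) / 2).toReal = ((d : ℝ) + 1) / 2 := by
    simp [ENNReal.toReal_div, ENNReal.toReal_add]
  have hp : ((d : ℝ≥0∞) + 1).toReal = (d : ℝ) + 1 := by simp [ENNReal.toReal_add]
  have hsum' : Summable fun g : {g : G // g ≠ 0} ↦ |Q g| ^ ((d : ℝ) + 1) :=
    (summable_abs_rpow_of_le (by positivity) (by linarith) hsum).comp_injective
      Subtype.val_injective
  have hγ' : eLpNorm Q (((d : ℝ≥0∞) + 1) / 2) .count ≤ γ :=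
    (eLpNorm_count_le_coe_iff (by simp) (by simp [ENNReal.div_eq_top])).2
      (by rw [hs]; exact ⟨hsum, hγ⟩)
  have hiff (f : {g : G // g ≠ 0} → ℝ) (M : ℝ≥0) : eLpNorm f ((d : ℝ≥0∞) + 1) .count ≤ M ↔
      (Summable fun j ↦ |f j| ^ ((d : ℝ) + 1)) ∧
        (∑' j, |f j| ^ ((d : ℝ) + 1)) ^ (1 / ((d : ℝ) + 1)) ≤ M := by
    rw [← hp]; exact eLpNorm_count_le_coe_iff (by simp) (by simp)
  have hfix := existsUnique_ratioMap_sub_eq hd hQ hγ' ((hiff _ δ).2 ⟨hsum', hδ⟩) (mod_cast hball)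
    (mod_cast hcontr)
  refine (existsUnique_congr fun x ↦ ?_).1 hfix
  rw [hiff, funext_iff, Pi.le_def]
  unfold ratioMap
  tauto

end Convolution

/-- core of Theorem 2.3: existence and uniqueness of a fixed point of `T`.
With `γ := ‖Q‖_{(d+1)/2,ℤ^k}` and `δ := ‖Q‖_{d+1,ℤ^k∖{0}}`, if `ε > 0` satisfies both
`δ + γ ε^d ≤ ε` and `2dγ ε^{d−1} + 2dδ ε^d < 1`, then `T` has a unique fixed point in
`{x ∈ D : ‖x‖_{d+1,ℤ^k∖{0}} ≤ ε}`. -/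
theorem stmt4 (k d : ℕ) (hk : 1 ≤ k) (hd : 2 ≤ d)
    (Q : ZkL k → ℝ) (hQpos : ∀ j, 0 < Q j) (hQ0 : Q 0 = 1)
    (hsum1 : Summable fun j : ZkL k => |Q j| ^ (((d : ℝ) + 1) / 2))
    (hsum2 : Summable fun j : ZkP k => |Q j.1| ^ ((d : ℝ) + 1))
    (ε : ℝ) (hε : 0 < ε)
    (hball : del k d Q + gam k d Q * ε ^ d ≤ ε)
    (hcontr : 2 * d * gam k d Q * ε ^ (d - 1) + 2 * d * del k d Q * ε ^ d < 1) :
    ∃! x : ZkP k → ℝ,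
      (memD k d x ∧ norm0 k ((d : ℝ) + 1) x ≤ ε) ∧
      ∀ i : ZkP k, opT k d Q x i.1 = x i := by
  have hrate : d * ε ^ (d - 1) * (gam k d Q + del k d Q * ε) < 1 := by
    have hpow : ε ^ d = ε ^ (d - 1) * ε := (pow_sub_one_mul (by lia) ε).symm
    rw [hpow] at hcontr
    linarith
  exact stmt4_general (G := ZkL k) (by lia) (fun j ↦ (hQpos j).le) hsum1 le_rfl le_rfl hε.le hball
    hrate
end
end
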